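/- Let f : ℝ³ → ℝ be continuously differentiable with ∫_{S²} f dσ = 0, where S² is the unit sphere in ℝ³. Define the tangential gradient ∇_{S²}f(u) = ∇f(u) − ⟨∇f(u), u⟩·u for u ∈ S². Then ∫_{S²} (‖∇_{S²}f(u)‖² − 2·f(u)²) dσ(u) ≥ 4·inf_{a ∈ ℝ³} ∫_{S²} (f(u) − ⟨a, u⟩)² dσ(u). -/

import Mathlib

open MeasureTheory Metric Filter
open scoped RealInnerProductSpace

noncomputable section

/-! The surface measure is invariant under rotations. Differentiating along one-parameter groups of
rotations gives an integration by parts formula on the unit sphere of `ℝᵈ`, hence Green's formula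
against a power of a linear form:
`∫ ⟪∇ₛf, ∇ₛ⟪a, ·⟫ⁿ⟫ = n (n + d - 2) ∫ f ⟪a, ·⟫ⁿ - n (n - 1) ‖a‖² ∫ f ⟪a, ·⟫ⁿ⁻²`.
The last integral vanishes if `f` is orthogonal to the polynomials of degree less than `n`, so the
Dirichlet form is block diagonal in the filtration of `L²` by degree, with eigenvalue
`n (n + d - 2)` in degree `n`: this is the spectrum of the Laplacian, obtained without second
derivatives. Polynomials are dense by the Stone-Weierstrass theorem. A function of mean zero splits
as a linear form, of eigenvalue `d - 1`, plus a remainder on which the Dirichlet form is at least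
`2 d` times the square of the norm; the stability constant is the difference `d + 1`.
-/

open Module Topology

section SpectralFiltration

variable {F H K : Type*} [AddCommGroup F] [Module ℝ F]
  [NormedAddCommGroup H] [InnerProductSpace ℝ H] [NormedAddCommGroup K] [InnerProductSpace ℝ K]

theorem exists_mem_map_sub_mem_orthogonal (T : F →ₗ[ℝ] H) (W : Submodule ℝ F)
    [FiniteDimensional ℝ W] (f : F) : ∃ w ∈ W, T (f - w) ∈ (W.map T)ᗮ := by
  obtain ⟨w, hw, hproj⟩ := (W.map T).starProjection_apply_mem (T f)
  refine ⟨w, hw, ?_⟩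
  rw [map_sub, hproj]
  exact Submodule.sub_starProjection_mem_orthogonal _

/-- An exhaustion `V` of the domain of a quadratic form `f ↦ ‖G f‖ ^ 2` by finite-dimensional
spaces whose successive orthogonal complements behave like eigenspaces: on the part of `V n`
orthogonal to `V (n - 1)`, the form is `ev n` times the square of the norm of `H`. The space `F`
is kept apart from `H`, as `G` need not be bounded with respect to the norm of `H`. -/
structure IsSpectralFiltration (T : F →ₗ[ℝ] H) (G : F →ₗ[ℝ] K) (V : ℕ → Submodule ℝ F)
    (ev : ℕ → ℝ) : Prop where
  mono : Monotone V
  finiteDimensional (n : ℕ) : FiniteDimensional ℝ (V n)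
  dense (f : F) : T f ∈ ((⨆ n, V n).map T).topologicalClosure
  inner_map_eq {n : ℕ} {g p : F} (hg : T g ∈ ((V n).map T)ᗮ) (hp : p ∈ V (n + 1)) :
    ⟪G g, G p⟫ = ev (n + 1) * ⟪T g, T p⟫

namespace IsSpectralFiltration

variable {T : F →ₗ[ℝ] H} {G : F →ₗ[ℝ] K} {V : ℕ → Submodule ℝ F} {ev : ℕ → ℝ} {n : ℕ} {r : F}

theorem orthogonal_anti (h : IsSpectralFiltration T G V ev) {m : ℕ} (hmn : m ≤ n)
    (hr : T r ∈ ((V n).map T)ᗮ) : T r ∈ ((V m).map T)ᗮ :=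
  Submodule.orthogonal_le (Submodule.map_mono (h.mono hmn)) hr

theorem exists_split (h : IsSpectralFiltration T G V ev) (hr : T r ∈ ((V n).map T)ᗮ) :
    ∃ p ∈ V (n + 1), T (r - p) ∈ ((V (n + 1)).map T)ᗮ ∧ ∀ c : ℝ,
      ‖G r‖ ^ 2 - c * ‖T r‖ ^ 2 =
        ‖G (r - p)‖ ^ 2 - c * ‖T (r - p)‖ ^ 2 + (ev (n + 1) - c) * ‖T p‖ ^ 2 := by
  have := h.finiteDimensional (n + 1)
  obtain ⟨p, hp, hrp⟩ := exists_mem_map_sub_mem_orthogonal T (V (n + 1)) r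
  have hrp' := h.orthogonal_anti n.le_succ hrp
  have hp' : T p ∈ ((V n).map T)ᗮ := by simpa using sub_mem hr hrp'
  have hTorth : ⟪T (r - p), T p⟫ = 0 :=
    Submodule.inner_left_of_mem_orthogonal (Submodule.mem_map_of_mem hp) hrp
  have hGorth : ⟪G (r - p), G p⟫ = 0 := by rw [h.inner_map_eq hrp' hp, hTorth, mul_zero]
  have hGp : ‖G p‖ ^ 2 = ev (n + 1) * ‖T p‖ ^ 2 := by
    simpa only [real_inner_self_eq_norm_sq] using h.inner_map_eq hp' hp
  have hT := norm_add_sq_real (T (r - p)) (T p)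
  have hG := norm_add_sq_real (G (r - p)) (G p)
  rw [← map_add, sub_add_cancel] at hT hG
  refine ⟨p, hp, hrp, fun c => ?_⟩
  rw [hT, hG, hTorth, hGorth, hGp]
  ring

theorem exists_residual (h : IsSpectralFiltration T G V ev) (hr : T r ∈ ((V n).map T)ᗮ) {c : ℝ}
    (hc : ∀ m > n, c ≤ ev m) (k : ℕ) :
    ∃ p ∈ V (n + k), T (r - p) ∈ ((V (n + k)).map T)ᗮ ∧
      ‖G (r - p)‖ ^ 2 - c * ‖T (r - p)‖ ^ 2 ≤ ‖G r‖ ^ 2 - c * ‖T r‖ ^ 2 := by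
  induction k with
  | zero => exact ⟨0, zero_mem _, by simpa using hr, by simp⟩
  | succ k ih =>
    obtain ⟨p, hp, hrp, hle⟩ := ih
    obtain ⟨q, hq, hrq, hsplit⟩ := h.exists_split hrp
    have hev : 0 ≤ (ev (n + k + 1) - c) * ‖T q‖ ^ 2 :=
      mul_nonneg (sub_nonneg.2 (hc _ (by lia))) (sq_nonneg _)
    refine ⟨p + q, add_mem (h.mono (n + k).le_succ hp) hq, ?_⟩
    rw [← sub_sub]
    exact ⟨hrq, by linarith [hsplit c]⟩

theorem mul_norm_sq_le (h : IsSpectralFiltration T G V ev) (hr : T r ∈ ((V n).map T)ᗮ) {c : ℝ}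
    (hc₀ : 0 ≤ c) (hc : ∀ m > n, c ≤ ev m) : c * ‖T r‖ ^ 2 ≤ ‖G r‖ ^ 2 := by
  suffices happrox : ∀ y ∈ ((⨆ n, V n).map T).topologicalClosure,
      c * ‖T r‖ ^ 2 ≤ ‖G r‖ ^ 2 + c * ‖T r - y‖ ^ 2 by
    simpa using happrox _ (h.dense r)
  refine fun y hy => closure_minimal (fun y hy => ?_)
    (isClosed_le (by fun_prop) (by fun_prop) :
      IsClosed {y | c * ‖T r‖ ^ 2 ≤ ‖G r‖ ^ 2 + c * ‖T r - y‖ ^ 2}) hy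
  obtain ⟨v, hv, rfl⟩ := hy
  obtain ⟨N, hvN⟩ := (Submodule.mem_iSup_of_directed V h.mono.directed_le).1 hv
  obtain ⟨p, hp, hrp, hle⟩ := h.exists_residual hr hc N
  have hbest : ‖T (r - p)‖ ^ 2 ≤ ‖T r - T v‖ ^ 2 := by
    have horth : ⟪T (r - p), T (p - v)⟫ = 0 := Submodule.inner_left_of_mem_orthogonal
      (Submodule.mem_map_of_mem (sub_mem hp (h.mono (N.le_add_left n) hvN))) hrp
    have hpyth := norm_add_sq_real (T (r - p)) (T (p - v))
    rw [← map_add, sub_add_sub_cancel, map_sub T r v, horth] at hpyth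
    linarith [sq_nonneg ‖T (p - v)‖]
  have := mul_le_mul_of_nonneg_left hbest hc₀
  rw [Set.mem_ofPred_eq]
  linarith [sq_nonneg ‖G (r - p)‖]

theorem exists_stability (h : IsSpectralFiltration T G V ev) (hr : T r ∈ ((V n).map T)ᗮ) {c : ℝ}
    (hc₀ : 0 ≤ c) (hc : ∀ m > n + 1, c ≤ ev m) :
    ∃ p ∈ V (n + 1), T (r - p) ∈ ((V (n + 1)).map T)ᗮ ∧
      (c - ev (n + 1)) * ‖T (r - p)‖ ^ 2 ≤ ‖G r‖ ^ 2 - ev (n + 1) * ‖T r‖ ^ 2 := by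
  obtain ⟨p, hp, hrp, hsplit⟩ := h.exists_split hr
  exact ⟨p, hp, hrp, by linarith [hsplit (ev (n + 1)), h.mul_norm_sq_le hrp hc₀ hc]⟩

end IsSpectralFiltration

end SpectralFiltration

section PowersDense

open NormedSpace

variable {X : Type*} [TopologicalSpace X] [CompactSpace X]

theorem exp_mem_topologicalClosure_of_pow_mem {A : Type*} [NormedRing A] [NormedAlgebra ℝ A]
    [CompleteSpace A] {S : Submodule ℝ A} {x : A} (hx : ∀ k : ℕ, x ^ k ∈ S) :
    exp x ∈ S.topologicalClosure :=
  mem_closure_of_tendsto (exp_series_hasSum_exp' (𝕂 := ℝ) x)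
    (Eventually.of_forall fun _ => sum_mem fun k _ => S.smul_mem _ (hx k))

-- The exponentials of the elements of `M` are limits of powers and, unlike powers, they form a
-- monoid; so their span is a subalgebra, to which the Stone-Weierstrass theorem applies.
theorem topologicalClosure_span_pow_eq_top (M : Submodule ℝ C(X, ℝ))
    (hM : ∀ x y, x ≠ y → ∃ f ∈ M, f x ≠ f y) :
    (Submodule.span ℝ {g | ∃ f ∈ M, ∃ k : ℕ, f ^ k = g}).topologicalClosure = ⊤ := by
  set P := Submodule.span ℝ {g | ∃ f ∈ M, ∃ k : ℕ, f ^ k = g}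
  let N : Submonoid C(X, ℝ) :=
    { carrier := exp '' M
      one_mem' := ⟨0, M.zero_mem, exp_zero⟩
      mul_mem' := by
        rintro _ _ ⟨f, hf, rfl⟩ ⟨g, hg, rfl⟩
        exact ⟨f + g, M.add_mem hf hg, exp_add⟩ }
  have hadjoin : Subalgebra.toSubmodule (Algebra.adjoin ℝ (N : Set C(X, ℝ))) ≤
      P.topologicalClosure := by
    rw [Algebra.adjoin_eq_span, Submonoid.closure_eq, Submodule.span_le]
    rintro _ ⟨f, hf, rfl⟩
    exact exp_mem_topologicalClosure_of_pow_mem fun k => Submodule.subset_span ⟨f, hf, k, rfl⟩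
  have hsep : (Algebra.adjoin ℝ (N : Set C(X, ℝ))).SeparatesPoints := by
    intro x y hxy
    obtain ⟨f, hf, hfxy⟩ := hM x y hxy
    refine ⟨_, ⟨exp f, Algebra.subset_adjoin ⟨f, hf, rfl⟩, rfl⟩, fun h => hfxy ?_⟩
    have hexp (z : X) : (exp f) z = Real.exp (f z) := by
      rw [Real.exp_eq_exp_ℝ]
      exact map_exp (ContinuousMap.evalAlgHom ℝ ℝ z) (continuous_eval_const z) f
    exact Real.exp_injective (by simpa only [hexp] using h)
  rw [eq_top_iff]
  intro f _
  exact closure_minimal hadjoin P.isClosed_topologicalClosure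
    ((ContinuousMap.subalgebra_topologicalClosure_eq_top_of_separatesPoints _ hsep).ge
      (Algebra.mem_top : f ∈ ⊤))

end PowersDense

section SphereMeasure

variable {E : Type*} [NormedAddCommGroup E] [InnerProductSpace ℝ E]

theorem cast_finrank_orthogonal_span_singleton [FiniteDimensional ℝ E] {v : E}
    (hv : v ≠ 0) : (finrank ℝ (ℝ ∙ v)ᗮ : ℝ) = finrank ℝ E - 1 := by
  have h := (ℝ ∙ v).finrank_add_finrank_orthogonal
  rw [finrank_span_singleton hv] at h
  rw [← h, Nat.cast_add, Nat.cast_one, add_sub_cancel_left]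

variable [MeasurableSpace E] [BorelSpace E]

variable (E) in
/-- The surface measure of the unit sphere of `E`, as the Hausdorff measure of codimension one. -/
def sphereMeasure : Measure (sphere (0 : E) 1) := μH[(finrank ℝ E : ℝ) - 1].comap Subtype.val

theorem integral_sphereMeasure (g : E → ℝ) :
    ∫ u : sphere (0 : E) 1, g u ∂sphereMeasure E =
      ∫ u in sphere 0 1, g u ∂μH[(finrank ℝ E : ℝ) - 1] :=
  integral_subtype_comap isClosed_sphere.measurableSet g

theorem integral_comp_linearIsometryEquiv (e : E ≃ₗᵢ[ℝ] E) (g : E → ℝ) :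
    ∫ u : sphere (0 : E) 1, g (e u) ∂sphereMeasure E =
      ∫ u : sphere (0 : E) 1, g u ∂sphereMeasure E := by
  have hpre : e.toIsometryEquiv ⁻¹' sphere (0 : E) 1 = sphere 0 1 := by
    ext u
    simp
  have h := (e.toIsometryEquiv.measurePreserving_hausdorffMeasure
    ((finrank ℝ E : ℝ) - 1)).setIntegral_preimage_emb e.toHomeomorph.measurableEmbedding g
      (sphere 0 1)
  rw [hpre] at h
  rw [integral_sphereMeasure, ← h]
  exact integral_sphereMeasure fun u => g (e u)

theorem integral_sphere_inner (a : E) :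
    ∫ u : sphere (0 : E) 1, ⟪a, (u : E)⟫ ∂sphereMeasure E = 0 := by
  have h := integral_comp_linearIsometryEquiv (LinearIsometryEquiv.neg ℝ) fun u : E => ⟪a, u⟫
  simp only [LinearIsometryEquiv.coe_neg, inner_neg_right, integral_neg] at h
  linarith

variable [FiniteDimensional ℝ E]

theorem hausdorffMeasure_finiteAt_nhdsWithin_sphere (x : sphere (0 : E) 1) :
    μH[(finrank ℝ E : ℝ) - 1].FiniteAtFilter (𝓝[sphere 0 1] (x : E)) := by
  have hv : ‖-(x : E)‖ = 1 := by simp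
  let χ := (stereographic hv).symm
  have hχ₀ : χ 0 = x := Subtype.ext (by simp [χ, stereographic, smul_smul])
  have hχ : ContDiff ℝ 1 fun w => (χ w : E) :=
    (contDiff_stereoInvFunAux (v := -(x : E))).comp (ℝ ∙ (-(x : E)))ᗮ.subtypeL.contDiff
  obtain ⟨C, s, hs, hC⟩ := (hχ.contDiffAt (x := 0)).exists_lipschitzOnWith
  obtain ⟨t, ht, hfin⟩ := μH[finrank ℝ (ℝ ∙ (-(x : E)))ᗮ].finiteAt_nhds (0 : (ℝ ∙ (-(x : E)))ᗮ)
  have hst : χ '' (s ∩ t) ∈ 𝓝 (χ 0) :=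
    (isOpenEmbedding_stereographic_symm hv).isOpenMap.image_mem_nhds (inter_mem hs ht)
  rw [hχ₀] at hst
  refine ⟨(fun w => (χ w : E)) '' (s ∩ t), ?_, ?_⟩
  · rw [← map_nhds_subtype_val, ← Set.image_image]
    exact image_mem_map hst
  · rw [← cast_finrank_orthogonal_span_singleton (norm_ne_zero_iff.1 (hv ▸ one_ne_zero))]
    calc μH[finrank ℝ (ℝ ∙ (-(x : E)))ᗮ] ((fun w => (χ w : E)) '' (s ∩ t))
        ≤ C ^ (finrank ℝ (ℝ ∙ (-(x : E)))ᗮ : ℝ) * μH[finrank ℝ (ℝ ∙ (-(x : E)))ᗮ] (s ∩ t) :=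
          (hC.mono Set.inter_subset_left).hausdorffMeasure_image_le (Nat.cast_nonneg _)
      _ < ⊤ := ENNReal.mul_lt_top (by simp) ((measure_mono Set.inter_subset_right).trans_lt hfin)

theorem hausdorffMeasure_sphere_lt_top : μH[(finrank ℝ E : ℝ) - 1] (sphere (0 : E) 1) < ⊤ :=
  (isCompact_sphere _ _).measure_lt_top_of_nhdsWithin fun x hx =>
    hausdorffMeasure_finiteAt_nhdsWithin_sphere ⟨x, hx⟩

instance : IsFiniteMeasure (sphereMeasure E) where
  measure_univ_lt_top := by
    rw [sphereMeasure, comap_subtype_coe_apply isClosed_sphere.measurableSet, Set.image_univ,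
      Subtype.range_coe]
    exact hausdorffMeasure_sphere_lt_top

theorem integrable_sphereMeasure {g : sphere (0 : E) 1 → ℝ} (hg : Continuous g) :
    Integrable g (sphereMeasure E) :=
  hg.integrable_of_hasCompactSupport (HasCompactSupport.of_compactSpace g)

-- The flow `exp (t • A)` consists of linear isometries, so it preserves the integral of `g`.
theorem integral_fderiv_skewAdjoint {A : E →L[ℝ] E} (hA : A ∈ skewAdjoint (E →L[ℝ] E))
    {g : E → ℝ} (hg : ContDiff ℝ 1 g) :
    ∫ u : sphere (0 : E) 1, fderiv ℝ g u (A u) ∂sphereMeasure E = 0 := by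
  let +nondep : NormedAlgebra ℚ (E →L[ℝ] E) := .restrictScalars ℚ ℝ _
  let e (t : ℝ) : E ≃ₗᵢ[ℝ] E := Unitary.linearIsometryEquiv
    ⟨_, NormedSpace.exp_mem_unitary_of_mem_skewAdjoint (skewAdjoint.smul_mem t hA)⟩
  have he (t : ℝ) (u : E) : HasDerivAt (fun s => e s u) (A (e t u)) t :=
    (hasDerivAt_exp_smul_const' A t).clm_apply (hasDerivAt_const t u) |>.congr_deriv (by simp; rfl)
  have hDg : Continuous fun u => fderiv ℝ g u (A u) :=
    (hg.continuous_fderiv one_ne_zero).clm_apply A.continuous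
  obtain ⟨C, hC⟩ := (isCompact_sphere (0 : E) 1).exists_bound_of_continuousOn hDg.continuousOn
  have hcont {h : E → ℝ} (hh : Continuous h) (t : ℝ) :
      Continuous fun u : sphere (0 : E) 1 => h (e t u) :=
    hh.comp ((e t).continuous.comp continuous_subtype_val)
  have hderiv := (hasDerivAt_integral_of_dominated_loc_of_deriv_le (μ := sphereMeasure E)
    (F := fun t u => g (e t u)) (F' := fun t u => fderiv ℝ g (e t u) (A (e t u)))
    (bound := fun _ => C) (x₀ := 0) univ_mem
    (Eventually.of_forall fun t => (hcont hg.continuous t).aestronglyMeasurable)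
    (integrable_sphereMeasure (hcont hg.continuous 0)) (hcont hDg 0).aestronglyMeasurable
    (Eventually.of_forall fun u t _ => hC _ (by simp)) (integrable_const C)
    (Eventually.of_forall fun u t _ =>
      (hg.differentiable one_ne_zero _).hasFDerivAt.comp_hasDerivAt t (he t u))).2
  simp only [integral_comp_linearIsometryEquiv _ g,
    integral_comp_linearIsometryEquiv _ fun u => fderiv ℝ g u (A u)] at hderiv
  exact hderiv.unique (hasDerivAt_const _ _)

end SphereMeasure

open InnerProductSpace in
theorem rankOne_sub_rankOne_mem_skewAdjoint {E : Type*} [NormedAddCommGroup E]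
    [InnerProductSpace ℝ E] [CompleteSpace E] (v w : E) :
    rankOne ℝ v w - rankOne ℝ w v ∈ skewAdjoint (E →L[ℝ] E) := by
  rw [skewAdjoint.mem_iff, star_sub, ContinuousLinearMap.star_eq_adjoint,
    ContinuousLinearMap.star_eq_adjoint, adjoint_rankOne, adjoint_rankOne, neg_sub]

theorem hasFDerivAt_inner_pow {E : Type*} [NormedAddCommGroup E] [InnerProductSpace ℝ E]
    (a u : E) (n : ℕ) :
    HasFDerivAt (fun v => ⟪a, v⟫ ^ n) ((n * ⟪a, u⟫ ^ (n - 1)) • innerSL ℝ a) u := by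
  simpa using (innerSL ℝ a).hasFDerivAt.pow n

section Green

variable {E : Type*} [NormedAddCommGroup E] [InnerProductSpace ℝ E]

theorem contDiff_inner_pow (a : E) (n : ℕ) : ContDiff ℝ 1 fun v => ⟪a, v⟫ ^ n :=
  (innerSL ℝ a).contDiff.pow n

theorem fderiv_mul_inner_pow_apply {f : E → ℝ} {u : E} (hf : DifferentiableAt ℝ f u) (a v : E)
    (n : ℕ) : fderiv ℝ (fun u => f u * ⟪a, u⟫ ^ n) u v =
      ⟪a, u⟫ ^ n * fderiv ℝ f u v + n * ⟪a, u⟫ ^ (n - 1) * ⟪a, v⟫ * f u := by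
  rw [(hf.hasFDerivAt.fun_mul (hasFDerivAt_inner_pow a u n)).fderiv]
  simp only [add_apply, smul_apply, coe_innerSL_apply,
    smul_eq_mul]
  ring

theorem sum_fderiv_mul_inner_apply {ι : Type*} [Fintype ι] (b : OrthonormalBasis ι ℝ E)
    {f : E → ℝ} {u : E} (hf : DifferentiableAt ℝ f u) (hu : ‖u‖ = 1) (w : E) :
    ∑ i, fderiv ℝ (fun v => f v * ⟪b i, v⟫) u (⟪b i, u⟫ • w - ⟪w, u⟫ • b i) =
      fderiv ℝ f u (w - ⟪w, u⟫ • u) - (finrank ℝ E - 1) * (⟪w, u⟫ * f u) := by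
  have hterm (i : ι) : fderiv ℝ (fun v => f v * ⟪b i, v⟫) u (⟪b i, u⟫ • w - ⟪w, u⟫ • b i) =
      ⟪u, b i⟫ * ⟪b i, u⟫ * fderiv ℝ f u w - ⟪w, u⟫ * fderiv ℝ f u (⟪b i, u⟫ • b i) +
        (⟪u, b i⟫ * ⟪b i, w⟫ - ⟪w, u⟫) * f u := by
    have h := fderiv_mul_inner_pow_apply hf (b i) (⟪b i, u⟫ • w - ⟪w, u⟫ • b i) 1
    simp only [pow_one] at h
    rw [h, real_inner_comm (b i) u]
    simp only [map_sub, map_smul, inner_sub_right, inner_smul_right, real_inner_self_eq_norm_sq,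
      b.norm_eq_one, smul_eq_mul]
    ring
  simp only [hterm, Finset.sum_add_distrib, Finset.sum_sub_distrib, ← Finset.sum_mul,
    ← Finset.mul_sum, ← map_sum, b.sum_inner_mul_inner, b.sum_repr', Finset.sum_const,
    Finset.card_univ, ← finrank_eq_card_basis b.toBasis, real_inner_self_eq_norm_sq, hu,
    nsmul_eq_mul]
  rw [map_sub, map_smul, smul_eq_mul, real_inner_comm w u]
  ring

variable [FiniteDimensional ℝ E]

/-- The component of the gradient of `f` at the point `u` of the unit sphere that is tangent to the
sphere. -/
def tangentialGradient (f : E → ℝ) (u : E) : E := gradient f u - ⟪gradient f u, u⟫ • u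

theorem inner_tangentialGradient {u : E} (hu : ‖u‖ = 1) (f g : E → ℝ) :
    ⟪tangentialGradient f u, tangentialGradient g u⟫ = fderiv ℝ f u (tangentialGradient g u) := by
  have horth : ⟪u, tangentialGradient g u⟫ = 0 := by
    simp [tangentialGradient, inner_sub_right, inner_smul_right, hu]
  rw [tangentialGradient, inner_sub_left, inner_smul_left, horth, mul_zero, sub_zero,
    inner_gradient_left]

theorem tangentialGradient_inner_pow (a u : E) (n : ℕ) :
    tangentialGradient (fun v => ⟪a, v⟫ ^ n) u = (n * ⟪a, u⟫ ^ (n - 1)) • (a - ⟪a, u⟫ • u) := by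
  have hgrad : gradient (fun v => ⟪a, v⟫ ^ n) u = (n * ⟪a, u⟫ ^ (n - 1)) • a := by
    refine HasGradientAt.gradient (hasGradientAt_iff_hasFDerivAt.2 ?_)
    exact (hasFDerivAt_inner_pow a u n).congr_fderiv (by ext; simp)
  rw [tangentialGradient, hgrad, real_inner_smul_left]
  module

variable [MeasurableSpace E] [BorelSpace E] {f : E → ℝ}

theorem integrable_fderiv_apply (hf : ContDiff ℝ 1 f) {X : E → E} (hX : Continuous X) :
    Integrable (fun u : sphere (0 : E) 1 => fderiv ℝ f u (X u)) (sphereMeasure E) :=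
  integrable_sphereMeasure
    (((hf.continuous_fderiv one_ne_zero).clm_apply hX).comp continuous_subtype_val)

open InnerProductSpace in
-- Sum over an orthonormal basis `b` the identity `integral_fderiv_skewAdjoint` for the rotations
-- in the planes of `w` and `b i`, applied to `f * ⟪b i, ·⟫`.
theorem integral_fderiv_sub_inner_smul (hf : ContDiff ℝ 1 f) (w : E) :
    ∫ u : sphere (0 : E) 1, fderiv ℝ f u (w - ⟪w, (u : E)⟫ • (u : E)) ∂sphereMeasure E =
      (finrank ℝ E - 1) * ∫ u : sphere (0 : E) 1, ⟪w, (u : E)⟫ * f u ∂sphereMeasure E := by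
  let b := stdOrthonormalBasis ℝ E
  let A (i : Fin (finrank ℝ E)) : E →L[ℝ] E := rankOne ℝ w (b i) - rankOne ℝ (b i) w
  have hA (i u) : A i u = ⟪b i, u⟫ • w - ⟪w, u⟫ • b i := by simp [A]
  have hfb (i) : ContDiff ℝ 1 fun u => f u * ⟪b i, u⟫ := hf.mul (innerSL ℝ (b i)).contDiff
  have hsum : ∑ i, ∫ u : sphere (0 : E) 1, fderiv ℝ (fun u => f u * ⟪b i, u⟫) u (A i u)
      ∂sphereMeasure E = 0 := Finset.sum_eq_zero fun i _ =>
    integral_fderiv_skewAdjoint (rankOne_sub_rankOne_mem_skewAdjoint w (b i)) (hfb i)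
  rw [← integral_finsetSum _ fun i _ => integrable_fderiv_apply (hfb i) (A i).continuous] at hsum
  simp only [hA, sum_fderiv_mul_inner_apply b (hf.differentiable one_ne_zero _)
    (norm_eq_of_mem_sphere _)] at hsum
  rw [integral_sub (integrable_fderiv_apply (X := fun u => w - ⟪w, u⟫ • u) hf (by fun_prop))
    (integrable_sphereMeasure (by fun_prop)), integral_const_mul] at hsum
  exact sub_eq_zero.1 hsum

theorem integral_inner_tangentialGradient_inner_pow (hf : ContDiff ℝ 1 f) (a : E) (n : ℕ) :
    ∫ u : sphere (0 : E) 1, ⟪tangentialGradient f u, tangentialGradient (fun v => ⟪a, v⟫ ^ n) u⟫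
      ∂sphereMeasure E =
      n * (n + finrank ℝ E - 2) * ∫ u : sphere (0 : E) 1, f u * ⟪a, (u : E)⟫ ^ n ∂sphereMeasure E -
        n * (n - 1) * ‖a‖ ^ 2 *
          ∫ u : sphere (0 : E) 1, f u * ⟪a, (u : E)⟫ ^ (n - 2) ∂sphereMeasure E := by
  have hfa (k : ℕ) : ContDiff ℝ 1 fun u => f u * ⟪a, u⟫ ^ k := hf.mul (contDiff_inner_pow a k)
  have hpt (u : sphere (0 : E) 1) :
      ⟪tangentialGradient f u, tangentialGradient (fun v => ⟪a, v⟫ ^ n) u⟫ =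
        n * fderiv ℝ (fun v => f v * ⟪a, v⟫ ^ (n - 1)) u (a - ⟪a, (u : E)⟫ • (u : E)) -
          n * (n - 1) * ‖a‖ ^ 2 * (f u * ⟪a, (u : E)⟫ ^ (n - 2)) +
          n * (n - 1) * (f u * ⟪a, (u : E)⟫ ^ n) := by
    rw [inner_tangentialGradient (norm_eq_of_mem_sphere u) f, tangentialGradient_inner_pow,
      fderiv_mul_inner_pow_apply (hf.differentiable one_ne_zero _), map_smul, inner_sub_right,
      inner_smul_right, real_inner_self_eq_norm_sq, smul_eq_mul]
    obtain _ | _ | n := n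
    · simp
    · simp
    · simp only [Nat.cast_add, Nat.cast_one, add_tsub_cancel_right, map_sub, map_smul, smul_eq_mul,
        Nat.reduceSubDiff]
      ring
  have hdiv := integral_fderiv_sub_inner_smul (hfa (n - 1)) a
  have hmul : n * ∫ u : sphere (0 : E) 1, ⟪a, (u : E)⟫ * (f u * ⟪a, (u : E)⟫ ^ (n - 1))
      ∂sphereMeasure E = n * ∫ u : sphere (0 : E) 1, f u * ⟪a, (u : E)⟫ ^ n ∂sphereMeasure E := by
    obtain _ | m := n
    · simp
    · simp only [Nat.add_sub_cancel, pow_succ', mul_left_comm]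
  have hD := integrable_fderiv_apply (X := fun u => a - ⟪a, u⟫ • u) (hfa (n - 1)) (by fun_prop)
  have hint (k : ℕ) : Integrable (fun u : sphere (0 : E) 1 => f u * ⟪a, (u : E)⟫ ^ k)
      (sphereMeasure E) := integrable_sphereMeasure (by fun_prop)
  simp only [hpt]
  rw [integral_add ((hD.const_mul _).sub' ((hint _).const_mul _)) ((hint _).const_mul _),
    integral_sub (hD.const_mul _) ((hint _).const_mul _), integral_const_mul, integral_const_mul,
    integral_const_mul, hdiv]
  linear_combination (finrank ℝ E - 1 : ℝ) * hmul

end Green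

section Sphere

open scoped Manifold ContDiff

theorem inner_toLp_eq_integral_inner {X E : Type*} [TopologicalSpace X] [CompactSpace X]
    [MeasurableSpace X] [BorelSpace X] (μ : Measure X) [IsFiniteMeasure μ] [NormedAddCommGroup E]
    [InnerProductSpace ℝ E] [SecondCountableTopologyEither X E] (f g : C(X, E)) :
    ⟪f.toLp 2 μ ℝ, g.toLp 2 μ ℝ⟫ = ∫ x, ⟪f x, g x⟫ ∂μ := by
  rw [L2.inner_def]
  refine integral_congr_ae ?_
  filter_upwards [f.coeFn_toLp (p := 2) (𝕜 := ℝ) μ, g.coeFn_toLp (p := 2) (𝕜 := ℝ) μ] with x hf hg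
  rw [hf, hg]

theorem finiteDimensional_span_pow {R V A : Type*} [Field R] [AddCommGroup V] [Module R V]
    [FiniteDimensional R V] [CommRing A] [Algebra R A] (l : V →ₗ[R] A) (n : ℕ) :
    FiniteDimensional R (Submodule.span R {p | ∃ a, ∃ k ≤ n, l a ^ k = p}) := by
  let W : Submodule R A := 1 ⊔ LinearMap.range l
  have hone : (1 : Submodule R A).FG := by
    rw [Submodule.one_eq_span]
    exact Submodule.fg_span_singleton 1
  have : FiniteDimensional R (W ^ n : Submodule R A) :=
    Module.Finite.of_fg ((hone.sup (Submodule.fg_range l)).pow n)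
  refine Submodule.finiteDimensional_of_le (S₂ := W ^ n) (Submodule.span_le.2 ?_)
  rintro _ ⟨a, k, hkn, rfl⟩
  exact (pow_le_pow_right₀ le_sup_left hkn : W ^ k ≤ W ^ n)
    (Submodule.pow_mem_pow W (Submodule.mem_sup_right ⟨a, rfl⟩) k)

variable {E : Type*} [NormedAddCommGroup E] [InnerProductSpace ℝ E]

/-- The linear form `⟪a, ·⟫` as a continuously differentiable function, linearly in `a`. -/
def linearForm : E →ₗ[ℝ] C^1⟮𝓘(ℝ, E), E; ℝ⟯ where
  toFun a := ⟨fun u => ⟪a, u⟫, (innerSL ℝ a).contDiff.contMDiff⟩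
  map_add' a b := by ext u; exact inner_add_left a b u
  map_smul' c a := by ext u; exact real_inner_smul_left a u c

variable (E) in
/-- The polynomial functions of degree at most `n`, presented as combinations of the powers of
linear forms, which span them by polarization. -/
def polynomialsOfDegreeLE (n : ℕ) : Submodule ℝ C^1⟮𝓘(ℝ, E), E; ℝ⟯ :=
  Submodule.span ℝ {p | ∃ a, ∃ k ≤ n, linearForm a ^ k = p}

theorem linearForm_pow_mem {k n : ℕ} (hkn : k ≤ n) (a : E) :
    linearForm a ^ k ∈ polynomialsOfDegreeLE E n :=
  Submodule.subset_span ⟨a, k, hkn, rfl⟩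

theorem polynomialsOfDegreeLE_mono : Monotone (polynomialsOfDegreeLE E) := by
  refine fun m n hmn => Submodule.span_mono ?_
  rintro _ ⟨a, k, hkm, rfl⟩
  exact ⟨a, k, hkm.trans hmn, rfl⟩

theorem exists_eq_smul_one_add_linearForm {p : C^1⟮𝓘(ℝ, E), E; ℝ⟯}
    (hp : p ∈ polynomialsOfDegreeLE E 1) : ∃ (c : ℝ) (a : E), p = c • 1 + linearForm a := by
  induction hp using Submodule.span_induction with
  | mem p hp =>
    obtain ⟨a, k, hk, rfl⟩ := hp
    obtain rfl | rfl := Nat.le_one_iff_eq_zero_or_eq_one.1 hk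
    · exact ⟨1, 0, by simp⟩
    · exact ⟨0, a, by simp⟩
  | zero => exact ⟨0, 0, by simp⟩
  | add p q _ _ hp hq =>
    obtain ⟨c, a, rfl⟩ := hp
    obtain ⟨d, b, rfl⟩ := hq
    exact ⟨c + d, a + b, by rw [map_add]; module⟩
  | smul t p _ hp =>
    obtain ⟨c, a, rfl⟩ := hp
    exact ⟨t * c, t • a, by rw [map_smul]; module⟩

variable (E) in
/-- Restriction of continuously differentiable functions to the unit sphere. -/
def sphereRestrict : C^1⟮𝓘(ℝ, E), E; ℝ⟯ →ₗ[ℝ] C(sphere (0 : E) 1, ℝ) where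
  toFun f := ⟨fun u => f u, f.contMDiff.continuous.comp continuous_subtype_val⟩
  map_add' _ _ := rfl
  map_smul' _ _ := rfl

variable [FiniteDimensional ℝ E]

instance (n : ℕ) : FiniteDimensional ℝ (polynomialsOfDegreeLE E n) :=
  finiteDimensional_span_pow linearForm n

theorem continuous_tangentialGradient {f : E → ℝ} (hf : ContDiff ℝ 1 f) :
    Continuous (tangentialGradient f) := by
  have hgrad : Continuous (gradient f) :=
    (InnerProductSpace.toDual ℝ E).symm.continuous.comp (hf.continuous_fderiv one_ne_zero)
  exact hgrad.sub ((hgrad.inner continuous_id).smul continuous_id)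

variable (E) in
/-- The tangential gradient along the unit sphere, as a linear map. -/
def sphereGradient : C^1⟮𝓘(ℝ, E), E; ℝ⟯ →ₗ[ℝ] C(sphere (0 : E) 1, E) where
  toFun f := ⟨fun u => tangentialGradient f u,
    (continuous_tangentialGradient f.contMDiff.contDiff).comp continuous_subtype_val⟩
  map_add' f g := by
    ext u
    have h : gradient (f + g : E → ℝ) u = gradient f u + gradient g u := by
      rw [gradient, fderiv_add (f.contMDiff.contDiff.differentiable one_ne_zero _)
        (g.contMDiff.contDiff.differentiable one_ne_zero _), map_add]
      rfl
    change tangentialGradient (f + g : E → ℝ) u = tangentialGradient f u + tangentialGradient g u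
    rw [tangentialGradient, h, inner_add_left, tangentialGradient, tangentialGradient]
    module
  map_smul' c f := by
    ext u
    have h : gradient (c • f : E → ℝ) u = c • gradient f u := by
      rw [gradient, fderiv_const_smul (f.contMDiff.contDiff.differentiable one_ne_zero _), map_smul]
      rfl
    change tangentialGradient (c • f : E → ℝ) u = c • tangentialGradient f u
    rw [tangentialGradient, h, real_inner_smul_left, tangentialGradient]
    module

variable [MeasurableSpace E] [BorelSpace E]

variable (E) in
/-- The class in `L²` of the unit sphere of a continuously differentiable function. -/
def sphereToL2 : C^1⟮𝓘(ℝ, E), E; ℝ⟯ →ₗ[ℝ] Lp ℝ 2 (sphereMeasure E) :=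
  (ContinuousMap.toLp 2 (sphereMeasure E) ℝ).toLinearMap ∘ₗ sphereRestrict E

variable (E) in
/-- The class in `L²` of the unit sphere of the tangential gradient of a continuously
differentiable function. -/
def sphereGradientToL2 : C^1⟮𝓘(ℝ, E), E; ℝ⟯ →ₗ[ℝ] Lp E 2 (sphereMeasure E) :=
  (ContinuousMap.toLp 2 (sphereMeasure E) ℝ).toLinearMap ∘ₗ sphereGradient E

theorem inner_sphereToL2 (f g : C^1⟮𝓘(ℝ, E), E; ℝ⟯) :
    ⟪sphereToL2 E f, sphereToL2 E g⟫ = ∫ u : sphere (0 : E) 1, f u * g u ∂sphereMeasure E :=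
  (inner_toLp_eq_integral_inner _ _ _).trans (integral_congr_ae (.of_forall fun _ => mul_comm _ _))

theorem inner_sphereGradientToL2 (f g : C^1⟮𝓘(ℝ, E), E; ℝ⟯) :
    ⟪sphereGradientToL2 E f, sphereGradientToL2 E g⟫ =
      ∫ u : sphere (0 : E) 1, ⟪tangentialGradient f u, tangentialGradient g u⟫ ∂sphereMeasure E :=
  inner_toLp_eq_integral_inner _ _ _

theorem norm_sphereToL2_sq (f : C^1⟮𝓘(ℝ, E), E; ℝ⟯) :
    ‖sphereToL2 E f‖ ^ 2 = ∫ u : sphere (0 : E) 1, f u ^ 2 ∂sphereMeasure E := by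
  simp only [← real_inner_self_eq_norm_sq (sphereToL2 E f), inner_sphereToL2, pow_two (f _)]

theorem norm_sphereGradientToL2_sq (f : C^1⟮𝓘(ℝ, E), E; ℝ⟯) :
    ‖sphereGradientToL2 E f‖ ^ 2 =
      ∫ u : sphere (0 : E) 1, ‖tangentialGradient f u‖ ^ 2 ∂sphereMeasure E := by
  simp only [← real_inner_self_eq_norm_sq, inner_sphereGradientToL2]

theorem norm_sphereGradientToL2_sq_sub (f : C^1⟮𝓘(ℝ, E), E; ℝ⟯) (c : ℝ) :
    ‖sphereGradientToL2 E f‖ ^ 2 - c * ‖sphereToL2 E f‖ ^ 2 =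
      ∫ u : sphere (0 : E) 1, (‖tangentialGradient f u‖ ^ 2 - c * f u ^ 2) ∂sphereMeasure E := by
  rw [norm_sphereGradientToL2_sq, norm_sphereToL2_sq, integral_sub, integral_const_mul]
  · exact integrable_sphereMeasure ((sphereGradient E f).continuous.norm.pow 2)
  · exact integrable_sphereMeasure (((sphereRestrict E f).continuous.pow 2).const_mul c)

theorem inner_sphereGradientToL2_linearForm_pow (f : C^1⟮𝓘(ℝ, E), E; ℝ⟯) (a : E) (n : ℕ) :
    ⟪sphereGradientToL2 E f, sphereGradientToL2 E (linearForm a ^ n)⟫ =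
      n * (n + finrank ℝ E - 2) * ⟪sphereToL2 E f, sphereToL2 E (linearForm a ^ n)⟫ -
        n * (n - 1) * ‖a‖ ^ 2 * ⟪sphereToL2 E f, sphereToL2 E (linearForm a ^ (n - 2))⟫ := by
  rw [inner_sphereGradientToL2, inner_sphereToL2, inner_sphereToL2]
  exact integral_inner_tangentialGradient_inner_pow f.contMDiff.contDiff a n

theorem sphereToL2_mem_topologicalClosure (f : C^1⟮𝓘(ℝ, E), E; ℝ⟯) :
    sphereToL2 E f ∈
      ((⨆ n, polynomialsOfDegreeLE E n).map (sphereToL2 E)).topologicalClosure := by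
  let M := LinearMap.range (sphereRestrict E ∘ₗ linearForm)
  have hM (x y : sphere (0 : E) 1) (hxy : x ≠ y) : ∃ g ∈ M, g x ≠ g y := by
    refine ⟨_, ⟨(x - y : E), rfl⟩, fun h => hxy (Subtype.ext (sub_eq_zero.1 ?_))⟩
    rw [← inner_self_eq_zero (𝕜 := ℝ), inner_sub_right]
    exact sub_eq_zero.2 h
  have hpow : Submodule.span ℝ {g | ∃ l ∈ M, ∃ k : ℕ, l ^ k = g} ≤
      (⨆ n, polynomialsOfDegreeLE E n).map (sphereRestrict E) := by
    rw [Submodule.span_le]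
    rintro _ ⟨_, ⟨a, rfl⟩, k, rfl⟩
    exact ⟨linearForm a ^ k, Submodule.mem_iSup_of_mem k (linearForm_pow_mem le_rfl a), rfl⟩
  have hf : sphereRestrict E f ∈
      ((⨆ n, polynomialsOfDegreeLE E n).map (sphereRestrict E)).topologicalClosure :=
    Submodule.topologicalClosure_mono hpow
      (topologicalClosure_span_pow_eq_top M hM ▸ Submodule.mem_top)
  rw [sphereToL2, Submodule.map_comp]
  exact Submodule.topologicalClosure_map (ContinuousMap.toLp 2 (sphereMeasure E) ℝ) _
    (Submodule.mem_map_of_mem hf)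

theorem isSpectralFiltration_sphere :
    IsSpectralFiltration (sphereToL2 E) (sphereGradientToL2 E) (polynomialsOfDegreeLE E)
      fun n => n * (n + finrank ℝ E - 2) where
  mono := polynomialsOfDegreeLE_mono
  finiteDimensional _ := inferInstance
  dense := sphereToL2_mem_topologicalClosure
  inner_map_eq {n g p} hg hp := by
    have horth {k : ℕ} (hkn : k ≤ n) (a : E) :
        ⟪sphereToL2 E g, sphereToL2 E (linearForm a ^ k)⟫ = 0 :=
      Submodule.inner_left_of_mem_orthogonal
        (Submodule.mem_map_of_mem (linearForm_pow_mem hkn a)) hg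
    induction hp using Submodule.span_induction with
    | mem p hp =>
      obtain ⟨a, k, hk, rfl⟩ := hp
      rw [inner_sphereGradientToL2_linearForm_pow, horth (k := k - 2) (by lia), mul_zero, sub_zero]
      obtain rfl | hkn := hk.eq_or_lt
      · rfl
      · rw [horth (by lia), mul_zero, mul_zero]
    | zero => simp
    | add p q _ _ hp hq => rw [map_add, map_add, inner_add_right, inner_add_right, hp, hq, mul_add]
    | smul c p _ hp =>
      rw [map_smul, map_smul, inner_smul_right, inner_smul_right, hp, mul_left_comm]

theorem sphereToL2_mem_orthogonal_iff {f : C^1⟮𝓘(ℝ, E), E; ℝ⟯} :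
    sphereToL2 E f ∈ ((polynomialsOfDegreeLE E 0).map (sphereToL2 E))ᗮ ↔
      ∫ u : sphere (0 : E) 1, f u ∂sphereMeasure E = 0 := by
  have hinner : ⟪sphereToL2 E 1, sphereToL2 E f⟫ =
      ∫ u : sphere (0 : E) 1, f u ∂sphereMeasure E := by
    rw [inner_sphereToL2]
    exact integral_congr_ae (.of_forall fun u => one_mul _)
  have hspan : polynomialsOfDegreeLE E 0 = Submodule.span ℝ {1} := by
    rw [polynomialsOfDegreeLE]
    congr 1
    ext p
    simp [eq_comm]
  rw [hspan, Submodule.map_span, Set.image_singleton,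
    Submodule.mem_orthogonal_singleton_iff_inner_right, hinner]

theorem exists_sphereToL2_eq_linearForm {p : C^1⟮𝓘(ℝ, E), E; ℝ⟯}
    (hp : p ∈ polynomialsOfDegreeLE E 1)
    (horth : sphereToL2 E p ∈ ((polynomialsOfDegreeLE E 0).map (sphereToL2 E))ᗮ) :
    ∃ a, sphereToL2 E p = sphereToL2 E (linearForm a) := by
  obtain ⟨c, a, rfl⟩ := exists_eq_smul_one_add_linearForm hp
  have hconst : c • (1 : C^1⟮𝓘(ℝ, E), E; ℝ⟯) ∈ polynomialsOfDegreeLE E 0 :=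
    Submodule.smul_mem _ c (pow_zero (linearForm a) ▸ linearForm_pow_mem le_rfl a)
  have hform : sphereToL2 E (linearForm a) ∈ ((polynomialsOfDegreeLE E 0).map (sphereToL2 E))ᗮ :=
    sphereToL2_mem_orthogonal_iff.2 (integral_sphere_inner a)
  refine ⟨a, sub_eq_zero.1 (Submodule.disjoint_def.1
    (Submodule.orthogonal_disjoint ((polynomialsOfDegreeLE E 0).map (sphereToL2 E))) _ ?_
    (sub_mem horth hform))⟩
  rw [← map_sub, add_sub_cancel_right]
  exact Submodule.mem_map_of_mem hconst

theorem exists_mul_norm_sub_linearForm_sq_le {f : C^1⟮𝓘(ℝ, E), E; ℝ⟯}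
    (h0 : ∫ u : sphere (0 : E) 1, f u ∂sphereMeasure E = 0) :
    ∃ a, (finrank ℝ E + 1) * ‖sphereToL2 E (f - linearForm a)‖ ^ 2 ≤
      ‖sphereGradientToL2 E f‖ ^ 2 - (finrank ℝ E - 1) * ‖sphereToL2 E f‖ ^ 2 := by
  have horth := sphereToL2_mem_orthogonal_iff.2 h0
  have hev (m : ℕ) (hm : m > 1) : (2 * finrank ℝ E : ℝ) ≤ m * (m + finrank ℝ E - 2) := by
    have hm' : (2 : ℝ) ≤ m := mod_cast hm
    nlinarith [(finrank ℝ E).cast_nonneg (α := ℝ)]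
  obtain ⟨p, hp, hfp, hle⟩ := isSpectralFiltration_sphere.exists_stability horth (by positivity) hev
  obtain ⟨a, ha⟩ := exists_sphereToL2_eq_linearForm hp <| by
    simpa using sub_mem horth (isSpectralFiltration_sphere.orthogonal_anti zero_le_one hfp)
  rw [map_sub, ha, ← map_sub] at hle
  refine ⟨a, ?_⟩
  push_cast at hle
  linear_combination hle

theorem sphere_stability_inequality_general {f : E → ℝ} (hf : ContDiff ℝ 1 f)
    (h0 : ∫ u in sphere (0 : E) 1, f u ∂(μH[(finrank ℝ E : ℝ) - 1]) = 0) :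
    (∫ u in sphere (0 : E) 1, (‖gradient f u - ⟪gradient f u, u⟫ • u‖ ^ 2 -
        (finrank ℝ E - 1) * f u ^ 2) ∂(μH[(finrank ℝ E : ℝ) - 1])) ≥
      (finrank ℝ E + 1) * ⨅ a : E,
        ∫ u in sphere (0 : E) 1, (f u - ⟪a, u⟫) ^ 2 ∂(μH[(finrank ℝ E : ℝ) - 1]) := by
  let F : C^1⟮𝓘(ℝ, E), E; ℝ⟯ := ⟨f, hf.contMDiff⟩
  simp only [← integral_sphereMeasure] at h0 ⊢
  obtain ⟨a, ha⟩ := exists_mul_norm_sub_linearForm_sq_le (f := F) h0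
  have hinf := ciInf_le (f := fun a : E => ∫ u : sphere (0 : E) 1, (f u - ⟪a, (u : E)⟫) ^ 2
    ∂sphereMeasure E) ⟨0, by rintro _ ⟨b, rfl⟩; positivity⟩ a
  calc
    _ = ‖sphereGradientToL2 E F‖ ^ 2 - (finrank ℝ E - 1) * ‖sphereToL2 E F‖ ^ 2 :=
      (norm_sphereGradientToL2_sq_sub F _).symm
    _ ≥ (finrank ℝ E + 1) * ‖sphereToL2 E (F - linearForm a)‖ ^ 2 := ha
    _ ≥ _ := by
      rw [norm_sphereToL2_sq]
      exact mul_le_mul_of_nonneg_left hinf (by positivity)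

end Sphere

theorem sphere_stability_inequality (f : EuclideanSpace ℝ (Fin 3) → ℝ)
    (hf : ContDiff ℝ 1 f)
    (h0 : ∫ u in sphere (0 : EuclideanSpace ℝ (Fin 3)) 1, f u ∂(μH[2]) = 0) :
    (∫ u in sphere (0 : EuclideanSpace ℝ (Fin 3)) 1,
        (‖gradient f u - ⟪gradient f u, u⟫ • u‖ ^ 2 - 2 * f u ^ 2) ∂(μH[2])) ≥
      4 * ⨅ a : EuclideanSpace ℝ (Fin 3),
        ∫ u in sphere (0 : EuclideanSpace ℝ (Fin 3)) 1, (f u - ⟪a, u⟫) ^ 2 ∂(μH[2]) := by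
  have h := sphere_stability_inequality_general (E := EuclideanSpace ℝ (Fin 3)) hf
  simp only [finrank_euclideanSpace_fin, Nat.cast_ofNat, show (3 : ℝ) - 1 = 2 by norm_num,
    show (3 : ℝ) + 1 = 4 by norm_num] at h
  exact h h0
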